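/- For every set D ⊆ Fin (x−1), every finite list H of elements of Fin (y+1), and all natural numbers a and c, the number of h ∈ P̃(T,B,D,H) with t(h) = a and b(h) = c equals the number of h ∈ P̃(T,B,D,H) with t(h) = c and b(h) = a. -/

import Mathlib

/-- The number of east steps of `h` shared with the path `Q` (contacts with `Q`). -/
noncomputable def ccount {x y : ℕ} (Q h : Fin x → Fin (y+1)) : ℕ :=
  Nat.card {j : Fin x // h j = Q j}

/-- The descent set of `h`: positions `j` where the `(j+1)`-st east step is
strictly higher than the `(j+2)`-nd one, i.e. where south steps occur. -/
def descentSet {x y : ℕ} (h : Fin x → Fin (y+1)) : Set (Fin (x-1)) :=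
  {j | h ⟨(j : ℕ) + 1, by have := j.isLt; omega⟩ < h ⟨(j : ℕ), by have := j.isLt; omega⟩}

/-- The non-contact height sequence of `h`: the list of heights of the east steps
of `h` that touch neither `B` nor `T`, in order. -/
def ncseq {x y : ℕ} (T B h : Fin x → Fin (y+1)) : List (Fin (y+1)) :=
  ((List.finRange x).filter fun j => decide (B j < h j ∧ h j < T j)).map h

/-!
By inclusion–exclusion over descent sets it suffices to count the paths whose descent set
contains `D`. The descents in `D` cut the positions into blocks. Along a block `h` decreases while
`T` and `B` weakly increase, so only its first step can lie on `T` and only its last step on `B`.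
In each block with exactly one of these two contacts, delete that contact, shift the other heights
by one position and put the opposite contact at the vacated end. This is an involution which keeps
the non-contact heights in order and exchanges the numbers of top and bottom contacts.
-/

section InclusionExclusion

open Finset

variable {ι β : Type*} [PartialOrder β] [DecidableEq β] [DecidableLE β]

theorem card_filter_le_eq_card_filter_eq_add_sum [DecidableLT β] (s : Finset ι) (f : ι → β)
    {V : Finset β} (hV : ∀ i ∈ s, f i ∈ V) (b : β) :
    #{i ∈ s | b ≤ f i} = #{i ∈ s | f i = b} + ∑ e ∈ V with b < e, #{i ∈ s | f i = e} := by
  classical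
  have hdisj : Disjoint {i ∈ s | f i = b} {i ∈ s | b < f i} :=
    disjoint_filter.2 fun i _ hi hlt => hlt.ne' hi
  have hunion : {i ∈ s | b ≤ f i} = {i ∈ s | f i = b} ∪ {i ∈ s | b < f i} := by
    rw [← filter_or]
    exact filter_congr fun i _ => le_iff_eq_or_lt.trans (or_congr_left eq_comm)
  have hfiber : #{i ∈ s | b < f i} = ∑ e ∈ V with b < e, #{i ∈ s | f i = e} := by
    rw [card_eq_sum_card_fiberwise (f := f) (t := {e ∈ V | b < e}) fun i hi => by simp_all]
    refine sum_congr rfl fun e he => ?_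
    rw [filter_filter]
    congr 1
    exact filter_congr fun i _ => and_iff_right_of_imp fun hi => hi ▸ (mem_filter.1 he).2
  rw [hunion, card_union_of_disjoint hdisj, hfiber]

theorem card_filter_eq_of_card_filter_le [WellFoundedGT β] {s t : Finset ι} {f : ι → β}
    (h : ∀ b, #{i ∈ s | b ≤ f i} = #{i ∈ t | b ≤ f i}) (b : β) :
    #{i ∈ s | f i = b} = #{i ∈ t | f i = b} := by
  classical
  induction b using WellFoundedGT.induction with
  | ind b ih =>
    have hsum := sum_congr (s₁ := {e ∈ (s ∪ t).image f | b < e}) rfl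
      fun e he => ih e (mem_filter.1 he).2
    have hs : ∀ i ∈ s, f i ∈ (s ∪ t).image f := fun i hi =>
      mem_image_of_mem f (mem_union_left t hi)
    have ht : ∀ i ∈ t, f i ∈ (s ∪ t).image f := fun i hi =>
      mem_image_of_mem f (mem_union_right s hi)
    have key := h b
    rw [card_filter_le_eq_card_filter_eq_add_sum s f hs,
      card_filter_le_eq_card_filter_eq_add_sum t f ht, hsum] at key
    exact Nat.add_right_cancel key

end InclusionExclusion

section Blocks

open scoped Finset

variable {S : Set ℤ}

theorem induction_from_blockStart (hS : BddBelow S) {P : ℤ → Prop}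
    (blockStart : ∀ j, j - 1 ∉ S → P j) (step : ∀ j ∈ S, P j → P (j + 1)) (j : ℤ) : P j := by
  obtain ⟨b, hb⟩ := hS
  have of_le : ∀ j ≤ b, P j := fun j hj =>
    blockStart j fun hmem => absurd (hb hmem) (by omega)
  rcases le_total j b with hj | hj
  · exact of_le j hj
  · induction j, hj using Int.leInduction with
    | base => exact of_le b le_rfl
    | succ j _ ih =>
      by_cases hmem : j ∈ S
      · exact step j hmem ih
      · exact blockStart (j + 1) (by rwa [add_sub_cancel_right])

theorem induction_from_blockEnd (hS : BddAbove S) {P : ℤ → Prop}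
    (blockEnd : ∀ j, j ∉ S → P j) (step : ∀ j ∈ S, P (j + 1) → P j) (j : ℤ) : P j := by
  obtain ⟨b, hb⟩ := hS
  have of_lt : ∀ j, b < j → P j := fun j hj => blockEnd j fun hmem => absurd (hb hmem) (by omega)
  rcases lt_or_ge b j with hj | hj
  · exact of_lt j hj
  · induction j, hj using Int.leInductionDown with
    | base =>
      by_cases hmem : b ∈ S
      · exact step b hmem (of_lt (b + 1) (by omega))
      · exact blockEnd b hmem
    | pred j _ ih =>
      by_cases hmem : j - 1 ∈ S
      · exact step (j - 1) hmem (by rwa [sub_add_cancel])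
      · exact blockEnd (j - 1) hmem

theorem card_filter_blockStart_eq_card_filter_blockEnd {I : Finset ℤ}
    (hI : ∀ j ∈ S, j ∈ I ∧ j + 1 ∈ I) {P : ℤ → Prop} (hP : ∀ j ∈ S, (P (j + 1) ↔ P j))
    [DecidablePred (· ∈ S)] [DecidablePred P] :
    #{j ∈ I | j - 1 ∉ S ∧ P j} = #{j ∈ I | j ∉ S ∧ P j} := by
  have hshift : #{j ∈ I | j - 1 ∈ S ∧ P j} = #{j ∈ I | j ∈ S ∧ P j} := by
    refine Finset.card_nbij' (· - 1) (· + 1) ?_ ?_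
      (fun j _ => sub_add_cancel j 1) (fun j _ => add_sub_cancel_right j 1)
    · intro j hj
      obtain ⟨-, hmem, hPj⟩ := Finset.mem_filter.1 hj
      exact Finset.mem_filter.2 ⟨(hI _ hmem).1, hmem, (hP _ hmem).1 (by rwa [sub_add_cancel])⟩
    · intro j hj
      obtain ⟨-, hmem, hPj⟩ := Finset.mem_filter.1 hj
      exact Finset.mem_filter.2
        ⟨(hI j hmem).2, by rwa [add_sub_cancel_right], (hP j hmem).2 hPj⟩
  have hstart := Finset.card_filter_add_card_filter_not (s := I.filter P) (· - 1 ∈ S)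
  have hend := Finset.card_filter_add_card_filter_not (s := I.filter P) (· ∈ S)
  simp only [Finset.filter_filter, and_comm (a := P _)] at hstart hend
  omega

end Blocks

section Contacts

variable {α : Type*} {S : Set ℤ} {T B h : ℤ → α} {j : ℤ}

/-- The block of `j`, the maximal run of positions around `j` linked by the forced descents
`S`, has its first position on `T`: `S` holds the `i` for which `i` and `i + 1` are linked. -/
def TouchesTop (S : Set ℤ) (T h : ℤ → α) (j : ℤ) : Prop :=
  ∃ i ≤ j, Set.Ico i j ⊆ S ∧ i - 1 ∉ S ∧ h i = T i

/-- The block of `j`, the maximal run of positions around `j` linked by the forced descents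
`S`, has its last position on `B`. -/
def TouchesBot (S : Set ℤ) (B h : ℤ → α) (j : ℤ) : Prop :=
  ∃ e ≥ j, Set.Ico j e ⊆ S ∧ e ∉ S ∧ h e = B e

theorem touchesTop_iff_of_blockStart (hj : j - 1 ∉ S) : TouchesTop S T h j ↔ h j = T j := by
  refine ⟨?_, fun hT => ⟨j, le_rfl, by simp, hj, hT⟩⟩
  rintro ⟨i, hij, hrun, -, hi⟩
  rcases hij.eq_or_lt with rfl | hlt
  · exact hi
  · exact absurd (hrun ⟨by omega, by omega⟩) hj

theorem touchesBot_iff_of_blockEnd (hj : j ∉ S) : TouchesBot S B h j ↔ h j = B j := by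
  refine ⟨?_, fun hB => ⟨j, le_rfl, by simp, hj, hB⟩⟩
  rintro ⟨e, hje, hrun, -, he⟩
  rcases hje.eq_or_lt with rfl | hlt
  · exact he
  · exact absurd (hrun ⟨le_rfl, hlt⟩) hj

theorem touchesTop_add_one_iff (hj : j ∈ S) : TouchesTop S T h (j + 1) ↔ TouchesTop S T h j := by
  constructor
  · rintro ⟨i, hij, hrun, hstart, hi⟩
    have hne : i ≠ j + 1 := fun heq => hstart (by rwa [heq, add_sub_cancel_right])
    exact ⟨i, by omega, (Set.Ico_subset_Ico_right (by omega)).trans hrun, hstart, hi⟩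
  · rintro ⟨i, hij, hrun, hstart, hi⟩
    refine ⟨i, by omega, fun k hk => ?_, hstart, hi⟩
    rcases (Int.lt_add_one_iff.1 hk.2).eq_or_lt with rfl | hlt
    · exact hj
    · exact hrun ⟨hk.1, hlt⟩

theorem touchesBot_add_one_iff (hj : j ∈ S) : TouchesBot S B h (j + 1) ↔ TouchesBot S B h j := by
  constructor
  · rintro ⟨e, hje, hrun, hend, he⟩
    refine ⟨e, by omega, fun k hk => ?_, hend, he⟩
    rcases hk.1.eq_or_lt with rfl | hlt
    · exact hj
    · exact hrun ⟨hlt, hk.2⟩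
  · rintro ⟨e, hje, hrun, hend, he⟩
    have hne : e ≠ j := fun heq => hend (heq ▸ hj)
    exact ⟨e, by omega, (Set.Ico_subset_Ico_left (by omega)).trans hrun, hend, he⟩

open Classical in
/-- Exchanges the top and bottom contacts of every block that has exactly one of the two: the
other heights of the block move by one position to make room for the new contact. -/
noncomputable def swapContacts (S : Set ℤ) (T B h : ℤ → α) (j : ℤ) : α :=
  if TouchesTop S T h j ∧ ¬ TouchesBot S B h j then
    if j ∈ S then h (j + 1) else B j
  else if TouchesBot S B h j ∧ ¬ TouchesTop S T h j then
    if j - 1 ∈ S then h (j - 1) else T j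
  else h j

theorem swapContacts_of_iff (hj : TouchesTop S T h j ↔ TouchesBot S B h j) :
    swapContacts S T B h j = h j := by
  simp [swapContacts, hj]

theorem swapContacts_of_top_of_mem (ht : TouchesTop S T h j) (hb : ¬ TouchesBot S B h j)
    (hj : j ∈ S) : swapContacts S T B h j = h (j + 1) := by
  simp [swapContacts, ht, hb, hj]

theorem swapContacts_of_top_of_notMem (ht : TouchesTop S T h j) (hb : ¬ TouchesBot S B h j)
    (hj : j ∉ S) : swapContacts S T B h j = B j := by
  simp [swapContacts, ht, hb, hj]

theorem swapContacts_of_bot_of_mem (ht : ¬ TouchesTop S T h j) (hb : TouchesBot S B h j)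
    (hj : j - 1 ∈ S) : swapContacts S T B h j = h (j - 1) := by
  simp [swapContacts, ht, hb, hj]

theorem swapContacts_of_bot_of_notMem (ht : ¬ TouchesTop S T h j) (hb : TouchesBot S B h j)
    (hj : j - 1 ∉ S) : swapContacts S T B h j = T j := by
  simp [swapContacts, ht, hb, hj]

variable [LinearOrder α]

/-- The height sequence `h` runs between `B` and `T` and descends at every position of `S`,
along which `B` and `T` are weakly increasing. -/
structure IsForcedPath (S : Set ℤ) (T B h : ℤ → α) : Prop where
  top_le_top : ∀ j ∈ S, T j ≤ T (j + 1)
  bot_le_bot : ∀ j ∈ S, B j ≤ B (j + 1)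
  bot_le : ∀ j, B j ≤ h j
  le_top : ∀ j, h j ≤ T j
  descends : ∀ j ∈ S, h (j + 1) < h j

namespace IsForcedPath

theorem bot_lt (hh : IsForcedPath S T B h) (hj : j ∈ S) : B j < h j :=
  calc B j ≤ B (j + 1) := hh.bot_le_bot j hj
    _ ≤ h (j + 1) := hh.bot_le (j + 1)
    _ < h j := hh.descends j hj

theorem lt_top (hh : IsForcedPath S T B h) (hj : j - 1 ∈ S) : h j < T j := by
  have hdesc := hh.descends _ hj
  have hmono := hh.top_le_top _ hj
  rw [sub_add_cancel] at hdesc hmono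
  exact hdesc.trans_le ((hh.le_top (j - 1)).trans hmono)

theorem eq_top_iff (hh : IsForcedPath S T B h) (j : ℤ) :
    h j = T j ↔ j - 1 ∉ S ∧ TouchesTop S T h j := by
  by_cases hj : j - 1 ∈ S
  · simp [hj, (hh.lt_top hj).ne]
  · simp [hj, touchesTop_iff_of_blockStart]

theorem eq_bot_iff (hh : IsForcedPath S T B h) (j : ℤ) :
    h j = B j ↔ j ∉ S ∧ TouchesBot S B h j := by
  by_cases hj : j ∈ S
  · simp [hj, (hh.bot_lt hj).ne']
  · simp [hj, touchesBot_iff_of_blockEnd]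

theorem bot_lt_of_not_touchesBot (hh : IsForcedPath S T B h) (hb : ¬ TouchesBot S B h j) :
    B j < h j :=
  lt_of_le_of_ne (hh.bot_le j) fun heq => hb ((hh.eq_bot_iff j).1 heq.symm).2

theorem lt_top_of_not_touchesTop (hh : IsForcedPath S T B h) (ht : ¬ TouchesTop S T h j) :
    h j < T j :=
  lt_of_le_of_ne (hh.le_top j) fun heq => ht ((hh.eq_top_iff j).1 heq).2

theorem swapContacts_lt_of_top (hh : IsForcedPath S T B h) (ht : TouchesTop S T h j)
    (hb : ¬ TouchesBot S B h j) : swapContacts S T B h j < h j := by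
  by_cases hj : j ∈ S
  · exact (swapContacts_of_top_of_mem ht hb hj).trans_lt (hh.descends j hj)
  · exact (swapContacts_of_top_of_notMem ht hb hj).trans_lt (hh.bot_lt_of_not_touchesBot hb)

theorem lt_swapContacts_of_bot (hh : IsForcedPath S T B h) (ht : ¬ TouchesTop S T h j)
    (hb : TouchesBot S B h j) : h j < swapContacts S T B h j := by
  by_cases hj : j - 1 ∈ S
  · have hdesc := hh.descends _ hj
    rw [sub_add_cancel] at hdesc
    exact hdesc.trans_eq (swapContacts_of_bot_of_mem ht hb hj).symm
  · exact (hh.lt_top_of_not_touchesTop ht).trans_eq (swapContacts_of_bot_of_notMem ht hb hj).symm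

theorem bot_le_swapContacts (hh : IsForcedPath S T B h) (j : ℤ) : B j ≤ swapContacts S T B h j := by
  by_cases hiff : TouchesTop S T h j ↔ TouchesBot S B h j
  · exact (hh.bot_le j).trans_eq (swapContacts_of_iff hiff).symm
  by_cases hb : TouchesBot S B h j
  · exact (hh.bot_le j).trans (hh.lt_swapContacts_of_bot (by tauto) hb).le
  have ht : TouchesTop S T h j := by tauto
  by_cases hj : j ∈ S
  · rw [swapContacts_of_top_of_mem ht hb hj]
    exact (hh.bot_le_bot j hj).trans (hh.bot_le (j + 1))
  · exact (swapContacts_of_top_of_notMem ht hb hj).ge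

theorem swapContacts_le_top (hh : IsForcedPath S T B h) (j : ℤ) : swapContacts S T B h j ≤ T j := by
  by_cases hiff : TouchesTop S T h j ↔ TouchesBot S B h j
  · exact (swapContacts_of_iff hiff).trans_le (hh.le_top j)
  by_cases ht : TouchesTop S T h j
  · exact (hh.swapContacts_lt_of_top ht (by tauto)).le.trans (hh.le_top j)
  have hb : TouchesBot S B h j := by tauto
  by_cases hj : j - 1 ∈ S
  · have hmono := hh.top_le_top _ hj
    rw [sub_add_cancel] at hmono
    rw [swapContacts_of_bot_of_mem ht hb hj]
    exact (hh.le_top (j - 1)).trans hmono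
  · exact (swapContacts_of_bot_of_notMem ht hb hj).le

theorem swapContacts_descends (hh : IsForcedPath S T B h) (hj : j ∈ S) :
    swapContacts S T B h (j + 1) < swapContacts S T B h j := by
  have htop := touchesTop_add_one_iff (T := T) (h := h) hj
  have hbot := touchesBot_add_one_iff (B := B) (h := h) hj
  by_cases hiff : TouchesTop S T h j ↔ TouchesBot S B h j
  · rw [swapContacts_of_iff hiff, swapContacts_of_iff (by rwa [htop, hbot])]
    exact hh.descends j hj
  by_cases ht : TouchesTop S T h j
  · have hb : ¬ TouchesBot S B h j := by tauto
    rw [swapContacts_of_top_of_mem ht hb hj]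
    exact hh.swapContacts_lt_of_top (htop.2 ht) (mt hbot.1 hb)
  · have hb : TouchesBot S B h j := by tauto
    rw [swapContacts_of_bot_of_mem (mt htop.1 ht) (hbot.2 hb) (by rwa [add_sub_cancel_right]),
      add_sub_cancel_right]
    exact hh.lt_swapContacts_of_bot ht hb

theorem swap (hh : IsForcedPath S T B h) : IsForcedPath S T B (swapContacts S T B h) where
  top_le_top := hh.top_le_top
  bot_le_bot := hh.bot_le_bot
  bot_le := hh.bot_le_swapContacts
  le_top := hh.swapContacts_le_top
  descends _ hj := hh.swapContacts_descends hj

theorem swapContacts_eq_top_iff_of_blockStart (hh : IsForcedPath S T B h) (hj : j - 1 ∉ S) :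
    swapContacts S T B h j = T j ↔ TouchesBot S B h j := by
  by_cases hiff : TouchesTop S T h j ↔ TouchesBot S B h j
  · rw [swapContacts_of_iff hiff, ← hiff, touchesTop_iff_of_blockStart hj]
  by_cases hb : TouchesBot S B h j
  · exact iff_of_true (swapContacts_of_bot_of_notMem (by tauto) hb hj) hb
  · have hlt := hh.swapContacts_lt_of_top (by tauto) hb
    exact iff_of_false (hlt.trans_le (hh.le_top j)).ne hb

theorem swapContacts_eq_bot_iff_of_blockEnd (hh : IsForcedPath S T B h) (hj : j ∉ S) :
    swapContacts S T B h j = B j ↔ TouchesTop S T h j := by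
  by_cases hiff : TouchesTop S T h j ↔ TouchesBot S B h j
  · rw [swapContacts_of_iff hiff, hiff, touchesBot_iff_of_blockEnd hj]
  by_cases ht : TouchesTop S T h j
  · exact iff_of_true (swapContacts_of_top_of_notMem ht (by tauto) hj) ht
  · have hlt := hh.lt_swapContacts_of_bot ht (by tauto)
    exact iff_of_false ((hh.bot_le j).trans_lt hlt).ne' ht

theorem touchesTop_swapContacts_iff (hh : IsForcedPath S T B h) (hS : BddBelow S) (j : ℤ) :
    TouchesTop S T (swapContacts S T B h) j ↔ TouchesBot S B h j := by
  induction j using induction_from_blockStart hS with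
  | blockStart j hj =>
    rw [touchesTop_iff_of_blockStart hj, hh.swapContacts_eq_top_iff_of_blockStart hj]
  | step j hj ih => rw [touchesTop_add_one_iff hj, touchesBot_add_one_iff hj, ih]

theorem touchesBot_swapContacts_iff (hh : IsForcedPath S T B h) (hS : BddAbove S) (j : ℤ) :
    TouchesBot S B (swapContacts S T B h) j ↔ TouchesTop S T h j := by
  induction j using induction_from_blockEnd hS with
  | blockEnd j hj =>
    rw [touchesBot_iff_of_blockEnd hj, hh.swapContacts_eq_bot_iff_of_blockEnd hj]
  | step j hj ih => rw [← touchesBot_add_one_iff hj, ← touchesTop_add_one_iff hj, ih]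

theorem swapContacts_eq_top_iff (hh : IsForcedPath S T B h) (hS : BddBelow S) (j : ℤ) :
    swapContacts S T B h j = T j ↔ j - 1 ∉ S ∧ TouchesBot S B h j := by
  rw [hh.swap.eq_top_iff, hh.touchesTop_swapContacts_iff hS]

theorem swapContacts_swapContacts (hh : IsForcedPath S T B h) (hbelow : BddBelow S)
    (habove : BddAbove S) : swapContacts S T B (swapContacts S T B h) = h := by
  funext j
  have htop := hh.touchesTop_swapContacts_iff hbelow j
  have hbot := hh.touchesBot_swapContacts_iff habove j
  by_cases hiff : TouchesTop S T h j ↔ TouchesBot S B h j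
  · rw [swapContacts_of_iff (by rw [htop, hbot, hiff]), swapContacts_of_iff hiff]
  by_cases ht : TouchesTop S T h j
  · have hb : ¬ TouchesBot S B h j := by tauto
    by_cases hj : j - 1 ∈ S
    · have htop' := touchesTop_add_one_iff (T := T) (h := h) hj
      have hbot' := touchesBot_add_one_iff (B := B) (h := h) hj
      rw [sub_add_cancel] at htop' hbot'
      rw [swapContacts_of_bot_of_mem (mt htop.1 hb) (hbot.2 ht) hj,
        swapContacts_of_top_of_mem (htop'.1 ht) (mt hbot'.2 hb) hj, sub_add_cancel]
    · rw [swapContacts_of_bot_of_notMem (mt htop.1 hb) (hbot.2 ht) hj,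
        (touchesTop_iff_of_blockStart hj).1 ht]
  · have hb : TouchesBot S B h j := by tauto
    by_cases hj : j ∈ S
    · have htop' := touchesTop_add_one_iff (T := T) (h := h) hj
      have hbot' := touchesBot_add_one_iff (B := B) (h := h) hj
      rw [swapContacts_of_top_of_mem (htop.2 hb) (mt hbot.1 ht) hj,
        swapContacts_of_bot_of_mem (mt htop'.1 ht) (hbot'.2 hb) (by rwa [add_sub_cancel_right]),
        add_sub_cancel_right]
    · rw [swapContacts_of_top_of_notMem (htop.2 hb) (mt hbot.1 ht) hj,
        (touchesBot_iff_of_blockEnd hj).1 hb]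

end IsForcedPath

end Contacts

section NonContacts

variable {α : Type*} [LinearOrder α] {S : Set ℤ} {T B h : ℤ → α}

/-- The non-contact heights of `h` at the positions `0, …, n - 1`, in order. -/
def nonContactsBelow (T B h : ℤ → α) (n : ℕ) : List α :=
  ((List.range n).filter fun k : ℕ => B k < h k ∧ h k < T k).map fun k : ℕ => h k

theorem nonContactsBelow_succ (T B h : ℤ → α) (n : ℕ) :
    nonContactsBelow T B h (n + 1) =
      nonContactsBelow T B h n ++ if B n < h n ∧ h n < T n then [h n] else [] := by
  by_cases hn : B n < h n ∧ h n < T n <;> simp [nonContactsBelow, List.range_succ, hn]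

namespace IsForcedPath

theorem isNonContact_iff (hh : IsForcedPath S T B h) (j : ℤ) :
    (B j < h j ∧ h j < T j) ↔
      (j ∈ S ∨ ¬ TouchesBot S B h j) ∧ (j - 1 ∈ S ∨ ¬ TouchesTop S T h j) := by
  rw [(hh.bot_le j).lt_iff_ne', (hh.le_top j).lt_iff_ne, Ne, Ne, hh.eq_bot_iff, hh.eq_top_iff]
  tauto

theorem isNonContact_swapContacts_iff (hh : IsForcedPath S T B h) (hbelow : BddBelow S)
    (habove : BddAbove S) (j : ℤ) :
    (B j < swapContacts S T B h j ∧ swapContacts S T B h j < T j) ↔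
      (j ∈ S ∨ ¬ TouchesTop S T h j) ∧ (j - 1 ∈ S ∨ ¬ TouchesBot S B h j) := by
  rw [hh.swap.isNonContact_iff, hh.touchesTop_swapContacts_iff hbelow,
    hh.touchesBot_swapContacts_iff habove]

open Classical in
/- Inside a block that `swapContacts` shifts, the two lists differ by one entry, which the `if`s
supply: a block losing its top contact runs ahead of `h`, one gaining it lags behind. -/
theorem nonContactsBelow_swapContacts_append (hh : IsForcedPath S T B h) (hS : BddAbove S)
    (hnonneg : ∀ j ∈ S, 0 ≤ j) (n : ℕ) :
    nonContactsBelow T B (swapContacts S T B h) n ++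
        (if (n : ℤ) - 1 ∈ S ∧ ¬ TouchesTop S T h n ∧ TouchesBot S B h n then [h (n - 1)] else []) =
      nonContactsBelow T B h n ++
        (if (n : ℤ) - 1 ∈ S ∧ TouchesTop S T h n ∧ ¬ TouchesBot S B h n then [h n] else []) := by
  induction n with
  | zero =>
    have hstart : (-1 : ℤ) ∉ S := fun hmem => absurd (hnonneg _ hmem) (by decide)
    simp [nonContactsBelow, hstart]
  | succ n ih =>
    have hbelow : BddBelow S := ⟨0, hnonneg⟩
    have hlag : ((n : ℤ) ∈ S ∧ ¬ TouchesTop S T h (n + 1) ∧ TouchesBot S B h (n + 1)) ↔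
        (n : ℤ) ∈ S ∧ ¬ TouchesTop S T h n ∧ TouchesBot S B h n :=
      and_congr_right fun hn => by rw [touchesTop_add_one_iff hn, touchesBot_add_one_iff hn]
    have hlead : ((n : ℤ) ∈ S ∧ TouchesTop S T h (n + 1) ∧ ¬ TouchesBot S B h (n + 1)) ↔
        (n : ℤ) ∈ S ∧ TouchesTop S T h n ∧ ¬ TouchesBot S B h n :=
      and_congr_right fun hn => by rw [touchesTop_add_one_iff hn, touchesBot_add_one_iff hn]
    simp only [nonContactsBelow_succ, hh.isNonContact_iff,
      hh.isNonContact_swapContacts_iff hbelow hS, Nat.cast_succ, add_sub_cancel_right, hlag, hlead]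
    by_cases ht : TouchesTop S T h n <;> by_cases hb : TouchesBot S B h n <;>
      simp only [ht, hb, not_true_eq_false, not_false_eq_true, and_true, and_false, true_and,
        or_true, or_false, if_true, if_false, List.append_nil] at ih ⊢
    · simp only [ih, swapContacts_of_iff (iff_of_true ht hb)]
    · by_cases hn : (n : ℤ) ∈ S
      · simp only [ih, hn, if_true, swapContacts_of_top_of_mem ht hb hn]
      · simp only [ih, hn, if_false, List.append_nil]
    · by_cases hn : (n : ℤ) - 1 ∈ S
      · simp only [← ih, hn, if_true, swapContacts_of_bot_of_mem ht hb hn]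
      · simp only [← ih, hn, if_false, List.append_nil]
    · simp only [ih, swapContacts_of_iff (iff_of_false ht hb)]

theorem nonContactsBelow_swapContacts (hh : IsForcedPath S T B h) (hS : BddAbove S)
    (hnonneg : ∀ j ∈ S, 0 ≤ j) {n : ℕ} (hn : (n : ℤ) - 1 ∉ S) :
    nonContactsBelow T B (swapContacts S T B h) n = nonContactsBelow T B h n := by
  simpa [hn] using hh.nonContactsBelow_swapContacts_append hS hnonneg n

end IsForcedPath

end NonContacts

section FinPaths

open scoped Finset

variable {x : ℕ} {α : Type*}

/-- The number of positions where `h` meets `Q`. -/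
noncomputable def contactCount (Q h : Fin x → α) : ℕ :=
  Nat.card {j : Fin x // h j = Q j}

/-- The positions `j` with `h (j + 1) < h j`. -/
def descents [LT α] (h : Fin x → α) : Set (Fin (x - 1)) :=
  {j | h ⟨(j : ℕ) + 1, by have := j.isLt; omega⟩ < h ⟨(j : ℕ), by have := j.isLt; omega⟩}

/-- The heights of `h` strictly between `B` and `T`, in order of position. -/
def nonContactHeights [LinearOrder α] (T B h : Fin x → α) : List α :=
  ((List.finRange x).filter fun j => decide (B j < h j ∧ h j < T j)).map h

/-- The extension of a height sequence to all integer positions by a fixed junk value, so that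
neighbouring positions exist everywhere. -/
noncomputable def intExtend [Nonempty α] (h : Fin x → α) : ℤ → α :=
  Function.extend (fun j : Fin x => (j : ℤ)) h fun _ => Classical.arbitrary α

/-- A set of descent positions, viewed as a set of integers. -/
def intDescents (D : Set (Fin (x - 1))) : Set ℤ :=
  (fun j : Fin (x - 1) => (j : ℤ)) '' D

theorem nonneg_of_mem_intDescents {D : Set (Fin (x - 1))} {k : ℤ} (hk : k ∈ intDescents D) :
    0 ≤ k := by
  obtain ⟨j, -, rfl⟩ := hk
  exact Int.natCast_nonneg j

theorem add_one_lt_of_mem_intDescents {D : Set (Fin (x - 1))} {k : ℤ} (hk : k ∈ intDescents D) :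
    k + 1 < x := by
  obtain ⟨j, -, rfl⟩ := hk
  have := j.isLt
  dsimp only
  omega

theorem bddBelow_intDescents (D : Set (Fin (x - 1))) : BddBelow (intDescents D) :=
  ⟨0, fun _ => nonneg_of_mem_intDescents⟩

theorem bddAbove_intDescents (D : Set (Fin (x - 1))) : BddAbove (intDescents D) :=
  ⟨x, fun k hk => by have := add_one_lt_of_mem_intDescents hk; omega⟩

section Extend

variable [Nonempty α]

theorem intExtend_natCast (h : Fin x → α) {k : ℕ} (hk : k < x) : intExtend h k = h ⟨k, hk⟩ :=
  Function.Injective.extend_apply (fun _ _ hij => Fin.ext (Int.ofNat_inj.1 hij)) h _ ⟨k, hk⟩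

theorem intExtend_natCast_add_one (h : Fin x → α) {k : ℕ} (hk : k + 1 < x) :
    intExtend h (k + 1) = h ⟨k + 1, hk⟩ :=
  intExtend_natCast h hk

theorem intExtend_coe (h : Fin x → α) (j : Fin x) : intExtend h j = h j :=
  intExtend_natCast h j.isLt

theorem intExtend_of_forall_ne (h : Fin x → α) {k : ℤ} (hk : ∀ j : Fin x, (j : ℤ) ≠ k) :
    intExtend h k = Classical.arbitrary α :=
  Function.extend_apply' _ _ _ fun ⟨j, hj⟩ => hk j hj

theorem intExtend_injective : Function.Injective (intExtend : (Fin x → α) → ℤ → α) :=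
  fun h h' heq => funext fun j => by rw [← intExtend_coe h, heq, intExtend_coe]

theorem intExtend_le_intExtend [Preorder α] {f g : Fin x → α} (hfg : ∀ j, f j ≤ g j) (k : ℤ) :
    intExtend f k ≤ intExtend g k := by
  by_cases hk : ∃ j : Fin x, (j : ℤ) = k
  · obtain ⟨j, rfl⟩ := hk
    simpa only [intExtend_coe] using hfg j
  · rw [not_exists] at hk
    rw [intExtend_of_forall_ne f hk, intExtend_of_forall_ne g hk]

theorem intExtend_le_add_one [Preorder α] {f : Fin x → α} (hf : Monotone f)
    {D : Set (Fin (x - 1))} {k : ℤ} (hk : k ∈ intDescents D) :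
    intExtend f k ≤ intExtend f (k + 1) := by
  obtain ⟨j, -, rfl⟩ := hk
  rw [intExtend_natCast_add_one f (by omega), intExtend_natCast f (by omega)]
  exact hf (Fin.mk_le_mk.2 (Nat.le_succ j))

theorem subset_descents_iff [LT α] {D : Set (Fin (x - 1))} {h : Fin x → α} :
    D ⊆ descents h ↔ ∀ k ∈ intDescents D, intExtend h (k + 1) < intExtend h k := by
  rw [intDescents, Set.forall_mem_image]
  refine forall₂_congr fun j _ => ?_
  rw [intExtend_natCast_add_one h (by omega), intExtend_natCast h (by omega)]
  rfl

theorem contactCount_eq_card_filter [DecidableEq α] (Q h : Fin x → α) :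
    contactCount Q h = #{k ∈ Finset.Ico (0 : ℤ) x | intExtend h k = intExtend Q k} := by
  rw [contactCount, Nat.subtype_card {j | h j = Q j} (by simp)]
  refine Finset.card_nbij (fun j => (j : ℤ)) (fun j hj => ?_)
    (fun _ _ _ _ hij => Fin.ext (Int.ofNat_inj.1 hij)) fun k hk => ?_
  · simpa [intExtend_coe] using hj
  · obtain ⟨hmem, heq⟩ := Finset.mem_filter.1 hk
    obtain ⟨hnonneg, hlt⟩ := Finset.mem_Ico.1 hmem
    lift k to ℕ using hnonneg
    rw [intExtend_natCast h (by omega), intExtend_natCast Q (by omega)] at heq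
    exact ⟨⟨k, by omega⟩, by simpa using heq, rfl⟩

variable [LinearOrder α] {D : Set (Fin (x - 1))} {T B h : Fin x → α}

theorem nonContactHeights_eq_nonContactsBelow (T B h : Fin x → α) :
    nonContactHeights T B h = nonContactsBelow (intExtend T) (intExtend B) (intExtend h) x := by
  simp only [nonContactHeights, nonContactsBelow, ← List.map_coe_finRange_eq_range,
    List.filter_map, List.map_map, Function.comp_def, intExtend_coe]

theorem isForcedPath_intExtend_iff (hT : Monotone T) (hB : Monotone B) :
    IsForcedPath (intDescents D) (intExtend T) (intExtend B) (intExtend h) ↔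
      (∀ j, B j ≤ h j ∧ h j ≤ T j) ∧ D ⊆ descents h := by
  constructor
  · intro hh
    refine ⟨fun j => ⟨?_, ?_⟩, subset_descents_iff.2 hh.descends⟩
    · simpa only [intExtend_coe] using hh.bot_le j
    · simpa only [intExtend_coe] using hh.le_top j
  · rintro ⟨hbounds, hD⟩
    exact
      { top_le_top := fun _ => intExtend_le_add_one hT
        bot_le_bot := fun _ => intExtend_le_add_one hB
        bot_le := intExtend_le_intExtend fun j => (hbounds j).1
        le_top := intExtend_le_intExtend fun j => (hbounds j).2
        descends := subset_descents_iff.1 hD }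

/-- `swapContacts` on height sequences indexed by `Fin x`, with the forced descents `D`. -/
noncomputable def finSwapContacts (D : Set (Fin (x - 1))) (T B h : Fin x → α) (j : Fin x) : α :=
  swapContacts (intDescents D) (intExtend T) (intExtend B) (intExtend h) j

theorem intExtend_finSwapContacts
    (hh : IsForcedPath (intDescents D) (intExtend T) (intExtend B) (intExtend h)) :
    intExtend (finSwapContacts D T B h) =
      swapContacts (intDescents D) (intExtend T) (intExtend B) (intExtend h) := by
  funext k
  by_cases hk : ∃ j : Fin x, (j : ℤ) = k
  · obtain ⟨j, rfl⟩ := hk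
    exact intExtend_coe _ j
  · rw [not_exists] at hk
    have hlow := hh.swap.bot_le k
    have hhigh := hh.swap.le_top k
    rw [intExtend_of_forall_ne _ hk] at hlow hhigh ⊢
    exact le_antisymm hlow hhigh

theorem finSwapContacts_finSwapContacts
    (hh : IsForcedPath (intDescents D) (intExtend T) (intExtend B) (intExtend h)) :
    finSwapContacts D T B (finSwapContacts D T B h) = h := by
  have hswap := intExtend_finSwapContacts hh
  apply intExtend_injective
  rw [intExtend_finSwapContacts (by rw [hswap]; exact hh.swap), hswap,
    hh.swapContacts_swapContacts (bddBelow_intDescents D) (bddAbove_intDescents D)]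

theorem nonContactHeights_finSwapContacts
    (hh : IsForcedPath (intDescents D) (intExtend T) (intExtend B) (intExtend h)) :
    nonContactHeights T B (finSwapContacts D T B h) = nonContactHeights T B h := by
  rw [nonContactHeights_eq_nonContactsBelow, nonContactHeights_eq_nonContactsBelow,
    intExtend_finSwapContacts hh]
  refine hh.nonContactsBelow_swapContacts (bddAbove_intDescents D)
    (fun _ => nonneg_of_mem_intDescents) fun hmem => ?_
  have := add_one_lt_of_mem_intDescents hmem
  omega

theorem contactCount_top_finSwapContacts
    (hh : IsForcedPath (intDescents D) (intExtend T) (intExtend B) (intExtend h)) :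
    contactCount T (finSwapContacts D T B h) = contactCount B h := by
  classical
  simp only [contactCount_eq_card_filter, intExtend_finSwapContacts hh, hh.eq_bot_iff,
    hh.swapContacts_eq_top_iff (bddBelow_intDescents D)]
  refine card_filter_blockStart_eq_card_filter_blockEnd (fun k hk => ?_)
    fun k hk => touchesBot_add_one_iff hk
  have hnonneg := nonneg_of_mem_intDescents hk
  have hlt := add_one_lt_of_mem_intDescents hk
  exact ⟨Finset.mem_Ico.2 ⟨by omega, by omega⟩, Finset.mem_Ico.2 ⟨by omega, by omega⟩⟩

theorem contactCount_bot_finSwapContacts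
    (hh : IsForcedPath (intDescents D) (intExtend T) (intExtend B) (intExtend h)) :
    contactCount B (finSwapContacts D T B h) = contactCount T h := by
  have hswap : IsForcedPath (intDescents D) (intExtend T) (intExtend B)
      (intExtend (finSwapContacts D T B h)) := by
    rw [intExtend_finSwapContacts hh]
    exact hh.swap
  rw [← contactCount_top_finSwapContacts hswap, finSwapContacts_finSwapContacts hh]

end Extend

section Paths

variable [LinearOrder α]

/-- The paths between `B` and `T` with non-contact heights `H`, `a` top contacts and `c` bottom
contacts, whatever their descents. -/
def pathsWithContacts (T B : Fin x → α) (H : List α) (a c : ℕ) : Set (Fin x → α) :=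
  {h | (∀ j, B j ≤ h j ∧ h j ≤ T j) ∧ nonContactHeights T B h = H ∧
    contactCount T h = a ∧ contactCount B h = c}

theorem finite_pathsWithContacts (T B : Fin x → α) (H : List α) (a c : ℕ) :
    (pathsWithContacts T B H a c).Finite := by
  have hfin : ∀ j, ({v | v = B j ∨ v = T j ∨ v ∈ H} : Set α).Finite := fun j =>
    (Set.finite_singleton _).union ((Set.finite_singleton _).union H.finite_toSet)
  refine (Set.Finite.pi' hfin).subset ?_
  rintro h ⟨hbounds, rfl, -, -⟩ j
  by_cases hbot : h j = B j
  · exact .inl hbot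
  by_cases htop : h j = T j
  · exact .inr (.inl htop)
  have hnon : B j < h j ∧ h j < T j :=
    ⟨lt_of_le_of_ne (hbounds j).1 (Ne.symm hbot), lt_of_le_of_ne (hbounds j).2 htop⟩
  exact .inr (.inr (List.mem_map.2 ⟨j, by simpa using hnon, rfl⟩))

theorem finSwapContacts_mem_pathsWithContacts [Nonempty α] {T B : Fin x → α} (hT : Monotone T)
    (hB : Monotone B) {D : Set (Fin (x - 1))} {H : List α} {a c : ℕ} {h : Fin x → α}
    (hh : h ∈ pathsWithContacts T B H a c) (hD : D ⊆ descents h) :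
    finSwapContacts D T B h ∈ pathsWithContacts T B H c a ∧
      D ⊆ descents (finSwapContacts D T B h) := by
  obtain ⟨hbounds, hH, ha, hc⟩ := hh
  have hpath := (isForcedPath_intExtend_iff hT hB).2 ⟨hbounds, hD⟩
  have hswap := hpath.swap
  rw [← intExtend_finSwapContacts hpath, isForcedPath_intExtend_iff hT hB] at hswap
  exact ⟨⟨hswap.1, (nonContactHeights_finSwapContacts hpath).trans hH,
    (contactCount_top_finSwapContacts hpath).trans hc,
    (contactCount_bot_finSwapContacts hpath).trans ha⟩, hswap.2⟩

open Classical in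
theorem card_filter_subset_descents_pathsWithContacts [Nonempty α] {T B : Fin x → α}
    (hT : Monotone T) (hB : Monotone B) (D : Set (Fin (x - 1))) (H : List α) (a c : ℕ) :
    #{h ∈ (finite_pathsWithContacts T B H a c).toFinset | D ⊆ descents h} =
      #{h ∈ (finite_pathsWithContacts T B H c a).toFinset | D ⊆ descents h} := by
  have hmaps : ∀ a c, Set.MapsTo (finSwapContacts D T B)
      {h ∈ (finite_pathsWithContacts T B H a c).toFinset | D ⊆ descents h}
      {h ∈ (finite_pathsWithContacts T B H c a).toFinset | D ⊆ descents h} := by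
    intro a c h hh
    simp only [Set.Finite.mem_toFinset, Set.mem_ofPred_eq] at hh ⊢
    exact finSwapContacts_mem_pathsWithContacts hT hB hh.1 hh.2
  have hinv : ∀ a c, Set.LeftInvOn (finSwapContacts D T B) (finSwapContacts D T B)
      {h ∈ (finite_pathsWithContacts T B H a c).toFinset | D ⊆ descents h} := by
    intro a c h hh
    simp only [Set.Finite.mem_toFinset, Set.mem_ofPred_eq] at hh
    exact finSwapContacts_finSwapContacts ((isForcedPath_intExtend_iff hT hB).2 ⟨hh.1.1, hh.2⟩)
  exact Finset.card_nbij' (finSwapContacts D T B) (finSwapContacts D T B)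
    (by simpa using hmaps a c) (by simpa using hmaps c a) (by simpa using hinv a c)
    (by simpa using hinv c a)

end Paths

end FinPaths

theorem stmt4_general {x : ℕ} {α : Type*} [LinearOrder α] [Nonempty α] (T B : Fin x → α)
    (hT : Monotone T) (hB : Monotone B) (D : Set (Fin (x - 1))) (H : List α) (a c : ℕ) :
    Nat.card {h : Fin x → α // (∀ j, B j ≤ h j ∧ h j ≤ T j) ∧ descents h = D ∧
        nonContactHeights T B h = H ∧ contactCount T h = a ∧ contactCount B h = c} =
      Nat.card {h : Fin x → α // (∀ j, B j ≤ h j ∧ h j ≤ T j) ∧ descents h = D ∧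
        nonContactHeights T B h = H ∧ contactCount T h = c ∧ contactCount B h = a} := by
  classical
  have hmem : ∀ a c (h : Fin x → α),
      h ∈ (finite_pathsWithContacts T B H a c).toFinset.filter (descents · = D) ↔
        (∀ j, B j ≤ h j ∧ h j ≤ T j) ∧ descents h = D ∧ nonContactHeights T B h = H ∧
          contactCount T h = a ∧ contactCount B h = c := fun a c h => by
    rw [Finset.mem_filter, Set.Finite.mem_toFinset, pathsWithContacts, Set.mem_ofPred_eq]
    tauto
  rw [Nat.subtype_card _ (hmem a c), Nat.subtype_card _ (hmem c a)]
  exact card_filter_eq_of_card_filter_le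
    (fun E => card_filter_subset_descents_pathsWithContacts hT hB E H a c) D

/-- The distribution of `(t, b)` over `P̃(T,B,D,H)` is symmetric. -/
theorem stmt4 {x y : ℕ} (T B : Fin x → Fin (y+1))
    (hT : Monotone T) (hB : Monotone B) (hTB : ∀ j, B j ≤ T j)
    (D : Set (Fin (x-1))) (H : List (Fin (y+1))) (a c : ℕ) :
    Nat.card {h : Fin x → Fin (y+1) // (∀ j, B j ≤ h j ∧ h j ≤ T j) ∧
        descentSet h = D ∧ ncseq T B h = H ∧ ccount T h = a ∧ ccount B h = c}
    = Nat.card {h : Fin x → Fin (y+1) // (∀ j, B j ≤ h j ∧ h j ≤ T j) ∧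
        descentSet h = D ∧ ncseq T B h = H ∧ ccount T h = c ∧ ccount B h = a} :=
  stmt4_general T B hT hB D H a c
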